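/- arXiv:1312.1280 — 2 statements merged into one kernel-verified Lean document; each statement's English description precedes it below -/
import Mathlib

section
/- Let e₀, λ, μ : ℝ → ℝ be C² functions and set σ = e₀'. If (w, v) : ℝ × ℝ → ℝ² is a C³ pair of functions satisfying the nonlinear phase transition model with viscosity and capillarity, ∂_t w − ∂_x v = 0 and ∂_t v − ∂_x (σ ∘ w) = ∂_x ( λ'(w) (∂_x w)²/2 − ∂_x ( λ(w) ∂_x w ) ) + ∂_x ( μ(w) ∂_x v ) everywhere, then everywhere: ∂_t ( e₀(w) + v²/2 + λ(w) (∂_x w)²/2 ) − ∂_x ( σ(w) v ) = ∂_x ( μ(w) v ∂_x v ) − μ(w) (∂_x v)² + ∂_x ( v λ'(w) (∂_x w)²/2 − v ∂_x ( λ(w) ∂_x w ) + ∂_x v λ(w) ∂_x w ). -/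
/-!
The balance is the momentum equation multiplied by `v`. With `A = λ'(w) w_x²/2`, `B = (λ(w) w_x)_x`
and `M = μ(w) v_x`, the product rule turns the right-hand side into
`v (A - B + M)_x + v_x A + λ(w) w_x v_xx`, because the two terms `v_x B` cancel and so do the two
terms `μ(w) v_x²`. The left-hand side is
`σ(w) w_t + v v_t + λ'(w) w_t w_x²/2 + λ(w) w_x w_xt - σ(w)_x v - σ(w) v_x`, which agrees with it
once `w_t = v_x`, the momentum equation and `w_xt = w_tx = v_xx` are inserted. The last chain is
symmetry of second derivatives (`pT_pX_comm`) followed by the first equation differentiated in `x`.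
The regularity assumptions make `σ(w)`, `A`, `B` and `M` of class `C¹`, so every product rule is
legitimate.
-/

/-- Partial derivative in the first (time) variable. -/
noncomputable def pT (u : ℝ → ℝ → ℝ) (t x : ℝ) : ℝ := deriv (fun s => u s x) t

/-- Partial derivative in the second (space) variable. -/
noncomputable def pX (u : ℝ → ℝ → ℝ) (t x : ℝ) : ℝ := deriv (fun y => u t y) x

open Function

lemma hasDerivAt_pX {u : ℝ → ℝ → ℝ} (hu : Differentiable ℝ (uncurry u)) (t x : ℝ) :
    HasDerivAt (fun y => u t y) (pX u t x) x := by
  have h : Differentiable ℝ (fun y => uncurry u (t, y)) := by fun_prop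
  exact (h x).hasDerivAt

lemma hasDerivAt_pT {u : ℝ → ℝ → ℝ} (hu : Differentiable ℝ (uncurry u)) (t x : ℝ) :
    HasDerivAt (fun s => u s x) (pT u t x) t := by
  have h : Differentiable ℝ (fun s => uncurry u (s, x)) := by fun_prop
  exact (h t).hasDerivAt

lemma pX_eq_fderiv {u : ℝ → ℝ → ℝ} (hu : Differentiable ℝ (uncurry u)) (t x : ℝ) :
    pX u t x = fderiv ℝ (uncurry u) (t, x) (0, 1) :=
  ((hu (t, x)).hasFDerivAt.comp_hasDerivAt x
    ((hasDerivAt_const x t).prodMk (hasDerivAt_id x))).deriv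

lemma pT_eq_fderiv {u : ℝ → ℝ → ℝ} (hu : Differentiable ℝ (uncurry u)) (t x : ℝ) :
    pT u t x = fderiv ℝ (uncurry u) (t, x) (1, 0) :=
  (HasFDerivAt.comp_hasDerivAt (f := fun s => (s, x)) t (hu (t, x)).hasFDerivAt
    ((hasDerivAt_id t).prodMk (hasDerivAt_const t x))).deriv

lemma contDiff_pX {u : ℝ → ℝ → ℝ} {n m : ℕ} (hu : ContDiff ℝ n (uncurry u)) (hmn : m + 1 ≤ n) :
    ContDiff ℝ m (uncurry (pX u)) := by
  have hd : Differentiable ℝ (uncurry u) :=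
    hu.differentiable (by exact_mod_cast (show n ≠ 0 by omega))
  have h : uncurry (pX u) = fun p => fderiv ℝ (uncurry u) p (0, 1) := by
    ext ⟨t, x⟩
    exact pX_eq_fderiv hd t x
  rw [h]
  exact (hu.fderiv_right (by exact_mod_cast hmn)).clm_apply contDiff_const

/-- Equality of the mixed partial derivatives of a `C²` function. -/
lemma pT_pX_comm {u : ℝ → ℝ → ℝ} (hu : ContDiff ℝ 2 (uncurry u)) (t x : ℝ) :
    pT (pX u) t x = pX (pT u) t x := by
  have hd : Differentiable ℝ (uncurry u) := hu.differentiable (by norm_num)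
  have hd2 : Differentiable ℝ (fderiv ℝ (uncurry u)) :=
    (hu.fderiv_right (m := 1) (by norm_num)).differentiable (by norm_num)
  have hsymm : IsSymmSndFDerivAt ℝ (uncurry u) (t, x) :=
    hu.contDiffAt.isSymmSndFDerivAt (by simp)
  have hX : pX u = fun t x => fderiv ℝ (uncurry u) (t, x) (0, 1) := by
    ext t x
    exact pX_eq_fderiv hd t x
  have hT : pT u = fun t x => fderiv ℝ (uncurry u) (t, x) (1, 0) := by
    ext t x
    exact pT_eq_fderiv hd t x
  have key : ∀ a : ℝ × ℝ, HasFDerivAt (fun p => fderiv ℝ (uncurry u) p a)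
      ((fderiv ℝ (fderiv ℝ (uncurry u)) (t, x)).flip a) (t, x) := by
    intro a
    simpa using (hd2 (t, x)).hasFDerivAt.clm_apply (hasFDerivAt_const a (t, x))
  have h1 : pT (pX u) t x = fderiv ℝ (fderiv ℝ (uncurry u)) (t, x) (1, 0) (0, 1) := by
    rw [hX]
    exact ((key (0, 1)).comp_hasDerivAt t
      ((hasDerivAt_id t).prodMk (hasDerivAt_const t x))).deriv
  have h2 : pX (pT u) t x = fderiv ℝ (fderiv ℝ (uncurry u)) (t, x) (0, 1) (1, 0) := by
    rw [hT]
    exact ((key (1, 0)).comp_hasDerivAt x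
      ((hasDerivAt_const x t).prodMk (hasDerivAt_id x))).deriv
  rw [h1, h2, hsymm.eq]

/-- Energy (entropy) balance identity for the nonlinear phase transition model with
viscosity `μ(w)` and capillarity `λ(w)`:
`w_t − v_x = 0`,
`v_t − σ(w)_x = ( λ'(w) w_x²/2 − (λ(w) w_x)_x )_x + ( μ(w) v_x )_x`, with `σ = e₀'`. -/
theorem entropy_balance_phase_transition
    (e₀ lam mu : ℝ → ℝ)
    (he₀ : ContDiff ℝ 2 e₀) (hlam : ContDiff ℝ 2 lam) (hmu : ContDiff ℝ 2 mu)
    (sig : ℝ → ℝ) (hsig : ∀ y : ℝ, sig y = deriv e₀ y)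
    (w v : ℝ → ℝ → ℝ)
    (hw : ContDiff ℝ 3 (Function.uncurry w)) (hv : ContDiff ℝ 3 (Function.uncurry v))
    (heq1 : ∀ t x : ℝ, pT w t x - pX v t x = 0)
    (heq2 : ∀ t x : ℝ,
      pT v t x - pX (fun t y => sig (w t y)) t x
        = pX (fun t y => deriv lam (w t y) * (pX w t y) ^ 2 / 2
              - pX (fun t' y' => lam (w t' y') * pX w t' y') t y) t x
          + pX (fun t y => mu (w t y) * pX v t y) t x) :
    ∀ t x : ℝ,
      pT (fun t x => e₀ (w t x) + (v t x) ^ 2 / 2 + lam (w t x) * (pX w t x) ^ 2 / 2) t x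
        - pX (fun t x => sig (w t x) * v t x) t x
        = pX (fun t x => mu (w t x) * v t x * pX v t x) t x
          - mu (w t x) * (pX v t x) ^ 2
          + pX (fun t y => v t y * deriv lam (w t y) * (pX w t y) ^ 2 / 2
              - v t y * pX (fun t' y' => lam (w t' y') * pX w t' y') t y
              + pX v t y * lam (w t y) * pX w t y) t x := by
  obtain rfl : sig = deriv e₀ := funext hsig
  intro t x
  have hwx : ContDiff ℝ 2 (uncurry (pX w)) := contDiff_pX (n := 3) (m := 2) hw le_rfl
  have hvx : ContDiff ℝ 2 (uncurry (pX v)) := contDiff_pX (n := 3) (m := 2) hv le_rfl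
  have hw2 : ContDiff ℝ 2 (uncurry w) := hw.of_le (by norm_num)
  have hdw : Differentiable ℝ (uncurry w) := hw.differentiable (by norm_num)
  have hdv : Differentiable ℝ (uncurry v) := hv.differentiable (by norm_num)
  have hdwx : Differentiable ℝ (uncurry (pX w)) := hwx.differentiable (by norm_num)
  have hdvx : Differentiable ℝ (uncurry (pX v)) := hvx.differentiable (by norm_num)
  have hde : Differentiable ℝ e₀ := he₀.differentiable (by norm_num)
  have hdlam : Differentiable ℝ lam := hlam.differentiable (by norm_num)
  have hdmu : Differentiable ℝ mu := hmu.differentiable (by norm_num)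
  have hdsig : Differentiable ℝ (deriv e₀) :=
    (ContDiff.deriv' (n := 1) he₀).differentiable (by norm_num)
  have hdlam' : Differentiable ℝ (deriv lam) :=
    (ContDiff.deriv' (n := 1) hlam).differentiable (by norm_num)
  -- The capillary flux `λ(w) w_x` is `C²`, so its `x`-derivative `B` is differentiable.
  have hL : ContDiff ℝ 2 (uncurry fun t y => lam (w t y) * pX w t y) :=
    (hlam.comp hw2).mul hwx
  have hdL := hL.differentiable (by norm_num)
  have hdB := (contDiff_pX (n := 2) (m := 1) hL le_rfl).differentiable (by norm_num)
  have hdA : Differentiable ℝ (uncurry fun t y => deriv lam (w t y) * (pX w t y) ^ 2 / 2) := by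
    have h : Differentiable ℝ
        (fun p => deriv lam (uncurry w p) * (uncurry (pX w) p) ^ 2 / 2) := by
      fun_prop
    exact h
  have hdM : Differentiable ℝ (uncurry fun t y => mu (w t y) * pX v t y) :=
    (hdmu.comp hdw).mul hdvx
  have hdS : Differentiable ℝ (uncurry fun t y => deriv e₀ (w t y)) := hdsig.comp hdw
  have hwt : pT w = pX v := by
    ext t x
    linarith [heq1 t x]
  have hwxt : pT (pX w) t x = pX (pX v) t x := by rw [pT_pX_comm hw2, hwt]
  have hA := hasDerivAt_pX hdA t x
  have hB := hasDerivAt_pX hdB t x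
  have hM := hasDerivAt_pX hdM t x
  have hS := hasDerivAt_pX hdS t x
  have hLx := hasDerivAt_pX hdL t x
  have hVx := hasDerivAt_pX hdv t x
  have hVxx := hasDerivAt_pX hdvx t x
  have hVt := hasDerivAt_pT hdv t x
  have hWt := hasDerivAt_pT hdw t x
  have hWxt := hasDerivAt_pT hdwx t x
  rw [hwt] at hWt
  rw [hwxt] at hWxt
  have hmom := heq2 t x
  have e0 : pX (fun t y => deriv lam (w t y) * (pX w t y) ^ 2 / 2
      - pX (fun t' y' => lam (w t' y') * pX w t' y') t y) t x = _ := (hA.sub hB).deriv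
  have e1 : pT (fun t x => e₀ (w t x) + (v t x) ^ 2 / 2 + lam (w t x) * (pX w t x) ^ 2 / 2) t x
      = _ := ((((hde _).hasDerivAt.comp t hWt).add ((hVt.pow 2).div_const 2)).add
        ((((hdlam _).hasDerivAt.comp t hWt).mul (hWxt.pow 2)).div_const 2)).deriv
  have e2 : pX (fun t x => deriv e₀ (w t x) * v t x) t x = _ := (hS.mul hVx).deriv
  have e3 : pX (fun t x => mu (w t x) * v t x * pX v t x) t x = _ :=
    ((hM.mul hVx).congr_of_eventuallyEq
      (.of_forall fun y => show mu (w t y) * v t y * pX v t y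
        = mu (w t y) * pX v t y * v t y by ring)).deriv
  have e4 : pX (fun t y => v t y * deriv lam (w t y) * (pX w t y) ^ 2 / 2
      - v t y * pX (fun t' y' => lam (w t' y') * pX w t' y') t y
      + pX v t y * lam (w t y) * pX w t y) t x = _ :=
    ((((hVx.mul hA).sub (hVx.mul hB)).add (hVxx.mul hLx)).congr_of_eventuallyEq
      (.of_forall fun y => show v t y * deriv lam (w t y) * (pX w t y) ^ 2 / 2
          - v t y * pX (fun t' y' => lam (w t' y') * pX w t' y') t y
          + pX v t y * lam (w t y) * pX w t y
        = v t y * (deriv lam (w t y) * (pX w t y) ^ 2 / 2)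
          - v t y * pX (fun t' y' => lam (w t' y') * pX w t' y') t y
          + pX v t y * (lam (w t y) * pX w t y) by ring)).deriv
  rw [e0] at hmom
  rw [e1, e2, e3, e4]
  simp only [Function.comp_apply, Pi.pow_apply]
  push_cast
  linear_combination (v t x) * hmom
end

section
/- Let g > 0, ρ₁, ρ₂ > 0 with r = ρ₁/ρ₂, and let b : ℝ → ℝ be C¹. Suppose h₁, h₂, u₁, u₂ : ℝ × ℝ → ℝ are C¹ functions with h₁ > 0, h₂ > 0 everywhere, satisfying the two-layer shallow water system everywhere: ∂_t h₁ + ∂_x (h₁ u₁) = 0, ∂_t h₂ + ∂_x (h₂ u₂) = 0, ∂_t (h₁ u₁) + ∂_x ( g h₁²/2 + h₁ u₁² ) = − g h₁ ∂_x (b + h₂), ∂_t (h₂ u₂) + ∂_x ( g h₂²/2 + h₂ u₂² ) = − g h₂ ∂_x (b + r h₁). Then with η = Σ_{j=1,2} ρ_j ( h_j u_j²/2 + g h_j²/2 + g h_j b ) + g ρ₁ h₁ h₂ and q = Σ_{j=1,2} ρ_j ( h_j u_j²/2 + g h_j² + g h_j b ) u_j + ρ₁ g h₁ h₂ (u₁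 + u₂), the identity ∂_t η + ∂_x q = 0 holds everywhere. -/
theorem hasDerivAt_pT_s10 {f : ℝ → ℝ → ℝ} (hf : ContDiff ℝ 1 (Function.uncurry f)) (t x : ℝ) :
    HasDerivAt (fun s => f s x) (pT f t x) t := by
  have hd : Differentiable ℝ (Function.uncurry f) := hf.differentiable one_ne_zero
  have h : Differentiable ℝ (fun s : ℝ => Function.uncurry f (s, x)) := by fun_prop
  exact (h t).hasDerivAt

theorem hasDerivAt_pX_s10 {f : ℝ → ℝ → ℝ} (hf : ContDiff ℝ 1 (Function.uncurry f)) (t x : ℝ) :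
    HasDerivAt (fun y => f t y) (pX f t x) x := by
  have hd : Differentiable ℝ (Function.uncurry f) := hf.differentiable one_ne_zero
  have h : Differentiable ℝ (fun y : ℝ => Function.uncurry f (t, y)) := by fun_prop
  exact (h x).hasDerivAt

/-- Entropy conservation identity for smooth solutions of the two-layer shallow
water system with bottom topography `b` and density ratio `r = ρ₁/ρ₂`. -/
theorem two_layer_shallow_water_entropy
    (g ρ₁ ρ₂ r : ℝ) (hg : 0 < g) (hρ₁ : 0 < ρ₁) (hρ₂ : 0 < ρ₂) (hr : r = ρ₁ / ρ₂)
    (b : ℝ → ℝ) (hb : ContDiff ℝ 1 b)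
    (h₁ h₂ u₁ u₂ : ℝ → ℝ → ℝ)
    (hh₁ : ContDiff ℝ 1 (Function.uncurry h₁)) (hh₂ : ContDiff ℝ 1 (Function.uncurry h₂))
    (hu₁ : ContDiff ℝ 1 (Function.uncurry u₁)) (hu₂ : ContDiff ℝ 1 (Function.uncurry u₂))
    (hh₁pos : ∀ t x : ℝ, 0 < h₁ t x) (hh₂pos : ∀ t x : ℝ, 0 < h₂ t x)
    (heq1 : ∀ t x : ℝ, pT h₁ t x + pX (fun t y => h₁ t y * u₁ t y) t x = 0)
    (heq2 : ∀ t x : ℝ, pT h₂ t x + pX (fun t y => h₂ t y * u₂ t y) t x = 0)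
    (heq3 : ∀ t x : ℝ,
      pT (fun t x => h₁ t x * u₁ t x) t x
        + pX (fun t y => g * (h₁ t y) ^ 2 / 2 + h₁ t y * (u₁ t y) ^ 2) t x
        = -(g * h₁ t x * pX (fun t y => b y + h₂ t y) t x))
    (heq4 : ∀ t x : ℝ,
      pT (fun t x => h₂ t x * u₂ t x) t x
        + pX (fun t y => g * (h₂ t y) ^ 2 / 2 + h₂ t y * (u₂ t y) ^ 2) t x
        = -(g * h₂ t x * pX (fun t y => b y + r * h₁ t y) t x)) :
    ∀ t x : ℝ,
      pT (fun t x =>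
          ρ₁ * (h₁ t x * (u₁ t x) ^ 2 / 2 + g * (h₁ t x) ^ 2 / 2 + g * h₁ t x * b x)
          + ρ₂ * (h₂ t x * (u₂ t x) ^ 2 / 2 + g * (h₂ t x) ^ 2 / 2 + g * h₂ t x * b x)
          + g * ρ₁ * h₁ t x * h₂ t x) t x
      + pX (fun t x =>
          ρ₁ * (h₁ t x * (u₁ t x) ^ 2 / 2 + g * (h₁ t x) ^ 2 + g * h₁ t x * b x) * u₁ t x
          + ρ₂ * (h₂ t x * (u₂ t x) ^ 2 / 2 + g * (h₂ t x) ^ 2 + g * h₂ t x * b x) * u₂ t x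
          + ρ₁ * g * h₁ t x * h₂ t x * (u₁ t x + u₂ t x)) t x = 0 := by
  intro t x
  have bx : HasDerivAt b (deriv b x) x := (hb.differentiable one_ne_zero x).hasDerivAt
  have h1t := hasDerivAt_pT_s10 hh₁ t x
  have h1x := hasDerivAt_pX_s10 hh₁ t x
  have h2t := hasDerivAt_pT_s10 hh₂ t x
  have h2x := hasDerivAt_pX_s10 hh₂ t x
  have u1t := hasDerivAt_pT_s10 hu₁ t x
  have u1x := hasDerivAt_pX_s10 hu₁ t x
  have u2t := hasDerivAt_pT_s10 hu₂ t x
  have u2x := hasDerivAt_pX_s10 hu₂ t x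
  have e1 := heq1 t x
  have e2 := heq2 t x
  have e3 := heq3 t x
  have e4 := heq4 t x
  rw [show pX (fun t y => h₁ t y * u₁ t y) t x = _ from (h1x.fun_mul u1x).deriv] at e1
  rw [show pX (fun t y => h₂ t y * u₂ t y) t x = _ from (h2x.fun_mul u2x).deriv] at e2
  rw [show pT (fun t y => h₁ t y * u₁ t y) t x = _ from (h1t.fun_mul u1t).deriv,
    show pX (fun t y => g * (h₁ t y) ^ 2 / 2 + h₁ t y * (u₁ t y) ^ 2) t x = _ from
      ((((h1x.fun_pow 2).const_mul g).div_const 2).fun_add (h1x.fun_mul (u1x.fun_pow 2))).deriv,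
    show pX (fun t y => b y + h₂ t y) t x = _ from (bx.fun_add h2x).deriv] at e3
  rw [show pT (fun t y => h₂ t y * u₂ t y) t x = _ from (h2t.fun_mul u2t).deriv,
    show pX (fun t y => g * (h₂ t y) ^ 2 / 2 + h₂ t y * (u₂ t y) ^ 2) t x = _ from
      ((((h2x.fun_pow 2).const_mul g).div_const 2).fun_add (h2x.fun_mul (u2x.fun_pow 2))).deriv,
    show pX (fun t y => b y + r * h₁ t y) t x = _ from
      (bx.fun_add (h1x.const_mul r)).deriv] at e4
  have hη := (((((((h1t.fun_mul (u1t.fun_pow 2)).div_const 2).fun_add (((h1t.fun_pow 2).const_mul g).div_const 2)).fun_add ((h1t.const_mul g).mul_const (b x))).const_mul ρ₁).fun_add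
    (((((h2t.fun_mul (u2t.fun_pow 2)).div_const 2).fun_add (((h2t.fun_pow 2).const_mul g).div_const 2)).fun_add ((h2t.const_mul g).mul_const (b x))).const_mul ρ₂)).fun_add
    ((h1t.const_mul (g * ρ₁)).fun_mul h2t)).deriv
  have hq := ((((((((h1x.fun_mul (u1x.fun_pow 2)).div_const 2).fun_add ((h1x.fun_pow 2).const_mul g)).fun_add ((h1x.const_mul g).fun_mul bx)).const_mul ρ₁).fun_mul u1x).fun_add
    ((((((h2x.fun_mul (u2x.fun_pow 2)).div_const 2).fun_add ((h2x.fun_pow 2).const_mul g)).fun_add ((h2x.const_mul g).fun_mul bx)).const_mul ρ₂).fun_mul u2x)).fun_add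
    (((h1x.const_mul (ρ₁ * g)).fun_mul h2x).fun_mul (u1x.fun_add u2x))).deriv
  have hρ : ρ₁ = ρ₂ * r := by
    rw [hr]
    field_simp
  -- Eliminating `ρ₁` leaves a polynomial identity without division.
  subst hρ
  refine (congrArg₂ (· + ·) hη hq).trans ?_
  linear_combination
    ρ₂ * r * (g * (h₁ t x + h₂ t x + b x) - u₁ t x ^ 2 / 2) * e1
      + ρ₂ * (g * (h₂ t x + r * h₁ t x + b x) - u₂ t x ^ 2 / 2) * e2
      + ρ₂ * r * u₁ t x * e3 + ρ₂ * u₂ t x * e4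
end
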